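/- Let R be a commutative noetherian ring and let 0 → K → L → M → 0 be a short exact sequence of R-modules such that depth R_p ≤ width_{R_p} K_p for every prime ideal p of R. If sup { depth R_p − width_{R_p} L_p | p ∈ Spec(R) } = n for some integer n > 0, then sup { depth R_p − width_{R_p} M_p | p ∈ Spec(R) } = n. -/

import Mathlib

open CategoryTheory

universe u

/-- The depth of a module `N` over a commutative noetherian local ring `S`,
`inf { i | Ext^i_S(k, N) ≠ 0 }`, as an element of the extended (integer) line,
with `inf ∅ = ⊤`. -/
noncomputable def moduleDepth (S : Type u) [CommRing S] [IsLocalRing S]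
    (N : Type u) [AddCommGroup N] [Module S N] : EReal :=
  sInf {i : EReal | ∃ n : ℕ, i = ((n : ℝ) : EReal) ∧
    Nontrivial (((Ext S (ModuleCat S) n).obj
      (Opposite.op (ModuleCat.of S (IsLocalRing.ResidueField S)))).obj (ModuleCat.of S N))}

/-- The width of a module `N` over a commutative noetherian local ring `S`,
`inf { i | Tor_i^S(k, N) ≠ 0 }`, as an element of the extended (integer) line,
with `inf ∅ = ⊤`. -/
noncomputable def moduleWidth (S : Type u) [CommRing S] [IsLocalRing S]
    (N : Type u) [AddCommGroup N] [Module S N] : EReal :=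
  sInf {i : EReal | ∃ n : ℕ, i = ((n : ℝ) : EReal) ∧
    Nontrivial (((Tor (ModuleCat S) n).obj
      (ModuleCat.of S (IsLocalRing.ResidueField S))).obj (ModuleCat.of S N))}

/-!
If `0 → K → L → M → 0` is exact and `d ≤ width K`, then the long exact sequence of `Tor` gives
`min d (width L) = min d (width M)`: the widths of `L` and `M` agree as far as they are below `d`.
Hence `d - width L` and `d - width M` have the same positive part; now take `d = depth R_p` and
localize at each `p`.

The long exact sequence of left derived functors comes from a degreewise split short exact sequence
of projective resolutions. A lift `P → Q` of `K → L` becomes a degreewise split monomorphism after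
adding the contractible cone of `𝟙 P` to `Q`, and its cokernel then resolves `M`.
-/

section HomotopyCofiber

open HomologicalComplex homotopyCofiber Limits

variable {C ι : Type*} [Category* C] [Preadditive C] [HasBinaryBiproducts C]
  {c : ComplexShape ι} [DecidableRel c.Rel]

lemma projective_homotopyCofiber_X {K L : HomologicalComplex C c} (φ : K ⟶ L)
    [∀ i, Projective (K.X i)] [∀ i, Projective (L.X i)] (i : ι) :
    Projective ((homotopyCofiber φ).X i) := by
  by_cases hi : c.Rel i (c.next i)
  · exact Projective.of_iso (XIsoBiprod φ i _ hi).symm inferInstance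
  · exact Projective.of_iso (XIso φ i hi).symm inferInstance

lemma nullHomotopicMap'_sndX_inlX_eq_id (K : HomologicalComplex C c)
    (hc : ∀ j, ∃ i, c.Rel i j) :
    (Homotopy.nullHomotopicMap' fun i j hij ↦ sndX (𝟙 K) i ≫ inlX (𝟙 K) i j hij :
      homotopyCofiber (𝟙 K) ⟶ homotopyCofiber (𝟙 K)) = 𝟙 _ := by
  ext j
  obtain ⟨i, hij⟩ := hc j
  by_cases! hj : ∃ k, c.Rel j k
  · obtain ⟨k, hjk⟩ := hj
    rw [Homotopy.nullHomotopicMap'_f hij hjk]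
    refine ext_from_X (𝟙 K) _ _ hjk ?_ ?_
    · simp [d_sndX_assoc _ _ _ hjk]
    · simp [inlX_d _ _ _ _ hij hjk]
  · rw [Homotopy.nullHomotopicMap'_f_of_not_rel_left hij hj]
    refine ext_from_X' (𝟙 K) _ (hj _) ?_
    simp [inlX_d' _ _ _ hij (hj _)]

/-- The contraction of the cone of the identity, sending the unshifted copy of `K` identically to
the shifted one. In degree `j` it needs some `i` with `c.Rel i j`: the shifted copy of `K.X j`
lives in degree `i`. -/
noncomputable def contractionHomotopyCofiberId (K : HomologicalComplex C c)
    (hc : ∀ j, ∃ i, c.Rel i j) : Homotopy (𝟙 (homotopyCofiber (𝟙 K))) 0 :=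
  (Homotopy.ofEq (nullHomotopicMap'_sndX_inlX_eq_id K hc).symm).trans (Homotopy.nullHomotopy' _)

end HomotopyCofiber

section ProjectiveResolution

open HomologicalComplex Limits

variable {C : Type*} [Category* C] [Abelian C]

lemma quasiIso_biprod_fst {ι : Type*} {c : ComplexShape ι} (K : HomologicalComplex C c)
    {E : HomologicalComplex C c} (hE : Homotopy (𝟙 E) 0) :
    QuasiIso (biprod.fst : K ⊞ E ⟶ K) :=
  HomotopyEquiv.quasiIso_hom
    { hom := biprod.fst
      inv := biprod.inl
      homotopyHomInvId := .symm <| Homotopy.equivSubZero.symm <|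
        (Homotopy.ofEq <| show 𝟙 (K ⊞ E) - biprod.fst ≫ biprod.inl =
            biprod.snd ≫ 𝟙 E ≫ biprod.inr by simp [← biprod.total]).trans <|
          ((hE.compRight biprod.inr).compLeft biprod.snd).trans (.ofEq (by simp))
      homotopyInvHomId := .ofEq biprod.inl_fst }

/-- The projective resolution obtained from `P` by adding a contractible complex of projectives,
which makes room for turning maps into it into monomorphisms. -/
noncomputable def projectiveResolutionBiprod {X : C} (P : ProjectiveResolution X)
    {E : ChainComplex C ℕ} [∀ n, Projective (E.X n)] (hE : Homotopy (𝟙 E) 0) :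
    ProjectiveResolution X where
  complex := P.complex ⊞ E
  projective n := Projective.of_iso (biprodXIso P.complex E n).symm inferInstance
  π := biprod.fst ≫ P.π
  quasiIso :=
    have := quasiIso_biprod_fst P.complex hE
    inferInstance

lemma exists_projectiveResolution_hom_isSplitMono {X Y : C} (f : X ⟶ Y)
    (P : ProjectiveResolution X) (Q : ProjectiveResolution Y) :
    ∃ (Q' : ProjectiveResolution Y) (φ : P.Hom Q' f), ∀ n, IsSplitMono (φ.hom.f n) := by
  let E := homotopyCofiber (𝟙 P.complex)
  have (n : ℕ) : Projective (E.X n) := projective_homotopyCofiber_X (𝟙 P.complex) n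
  let hE : Homotopy (𝟙 E) 0 := contractionHomotopyCofiberId P.complex fun j ↦ ⟨j + 1, rfl⟩
  let φ : P.complex ⟶ Q.complex ⊞ E :=
    biprod.lift (ProjectiveResolution.lift f P Q) (homotopyCofiber.inr _)
  have hφ : φ ≫ biprod.fst ≫ Q.π = P.π ≫ (ChainComplex.single₀ C).map f := by
    rw [biprod.lift_fst_assoc, ProjectiveResolution.lift_commutes]
  refine ⟨projectiveResolutionBiprod Q hE, ⟨φ, HomologicalComplex.congr_hom hφ 0⟩, fun n ↦ ?_⟩
  exact .mk' ⟨(biprod.snd : Q.complex ⊞ E ⟶ E).f n ≫ homotopyCofiber.sndX (𝟙 P.complex) n,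
    by simp [projectiveResolutionBiprod, φ, ← HomologicalComplex.comp_f_assoc, E]⟩

lemma projective_X₃_of_shortExact_of_isSplitMono {S : ShortComplex C} (hS : S.ShortExact)
    [IsSplitMono S.f] [Projective S.X₂] : Projective S.X₃ :=
  have := hS.epi_g
  let s := ShortComplex.Splitting.ofExactOfRetraction S hS.exact (retraction S.f)
    (IsSplitMono.id S.f) inferInstance
  Retract.projective ⟨s.s, S.g, s.s_g⟩

lemma exists_shortExact_projectiveResolution_of_isSplitMono {S : ShortComplex C} (hS : S.ShortExact)
    {P₁ : ProjectiveResolution S.X₁} {P₂ : ProjectiveResolution S.X₂} (φ : P₁.Hom P₂ S.f)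
    (hφ : ∀ n, IsSplitMono (φ.hom.f n)) :
    ∃ (P₃ : ProjectiveResolution S.X₃) (ψ : P₂.Hom P₃ S.g) (w : φ.hom ≫ ψ.hom = 0),
      (ShortComplex.mk φ.hom ψ.hom w).ShortExact := by
  have : Mono φ.hom := HomologicalComplex.mono_of_mono_f _ fun n ↦ inferInstance
  let T : ShortComplex (ChainComplex C ℕ) := .mk φ.hom (cokernel.π φ.hom) (by simp)
  have hT : T.ShortExact := { exact := ShortComplex.exact_cokernel φ.hom }
  have w : φ.hom ≫ P₂.π ≫ (ChainComplex.single₀ C).map S.g = 0 := by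
    rw [φ.hom_comp_π_assoc, ← Functor.map_comp, S.zero, Functor.map_zero, comp_zero]
  let α : T ⟶ S.map (ChainComplex.single₀ C) :=
    { τ₁ := P₁.π
      τ₂ := P₂.π
      τ₃ := cokernel.desc φ.hom (P₂.π ≫ (ChainComplex.single₀ C).map S.g) w
      comm₁₂ := φ.hom_comp_π.symm
      comm₂₃ := (cokernel.π_desc _ _ _).symm }
  let P₃ : ProjectiveResolution S.X₃ :=
    { complex := T.X₃
      projective n :=
        have : IsSplitMono (T.map (eval C _ n)).f := hφ n
        have : Projective (T.map (eval C _ n)).X₂ := P₂.projective n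
        projective_X₃_of_shortExact_of_isSplitMono (hT.map_of_exact (eval C _ n))
      π := α.τ₃
      quasiIso := HomologySequence.quasiIso_τ₃ α hT (hS.map_of_exact _) P₁.quasiIso P₂.quasiIso }
  refine ⟨P₃, ⟨T.g, ?_⟩, T.zero, hT⟩
  exact HomologicalComplex.congr_hom (cokernel.π_desc φ.hom _ w) 0

lemma exists_shortExact_projectiveResolution {S : ShortComplex C} (hS : S.ShortExact)
    [HasProjectiveResolution S.X₁] [HasProjectiveResolution S.X₂] :
    ∃ (P₁ : ProjectiveResolution S.X₁) (P₂ : ProjectiveResolution S.X₂)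
      (P₃ : ProjectiveResolution S.X₃) (φ : P₁.Hom P₂ S.f) (ψ : P₂.Hom P₃ S.g)
      (w : φ.hom ≫ ψ.hom = 0), (ShortComplex.mk φ.hom ψ.hom w).ShortExact := by
  obtain ⟨P₂, φ, hφ⟩ :=
    exists_projectiveResolution_hom_isSplitMono S.f (projectiveResolution S.X₁)
      (projectiveResolution S.X₂)
  obtain ⟨P₃, ψ, w, h⟩ := exists_shortExact_projectiveResolution_of_isSplitMono hS φ hφ
  exact ⟨_, P₂, P₃, φ, ψ, w, h⟩

end ProjectiveResolution

section LeftDerived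

open HomologicalComplex Limits

variable {C D : Type*} [Category* C] [Abelian C] [Category* D] [Abelian D]

lemma shortExact_mapHomologicalComplex {ι : Type*} {c : ComplexShape ι}
    {T : ShortComplex (HomologicalComplex C c)} (hT : T.ShortExact)
    [∀ i, Projective (T.X₃.X i)] (F : C ⥤ D) [F.Additive] :
    (T.map (F.mapHomologicalComplex c)).ShortExact :=
  shortExact_of_degreewise_shortExact _ fun i ↦
    have : Projective (T.map (eval C c i)).X₃ := inferInstanceAs (Projective (T.X₃.X i))
    ((hT.map_of_exact (eval C c i)).splittingOfProjective.map F).shortExact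

variable [HasProjectiveResolutions C]

instance preservesZeroMorphisms_leftDerived (F : C ⥤ D) [F.Additive] (n : ℕ) :
    (F.leftDerived n).PreservesZeroMorphisms where
  map_zero X Y := by
    rw [F.leftDerived_map_eq n (0 : X ⟶ Y) (P := projectiveResolution X)
      (Q := projectiveResolution Y) (g := 0) (by simp), Functor.map_zero, zero_comp, comp_zero]

lemma exists_shortExact_homology_iso_leftDerived {S : ShortComplex C} (hS : S.ShortExact)
    (F : C ⥤ D) [F.Additive] :
    ∃ T : ShortComplex (ChainComplex D ℕ), T.ShortExact ∧
      ∀ n, Nonempty (S.map (F.leftDerived n) ≅ T.map (homologyFunctor D _ n)) := by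
  obtain ⟨P₁, P₂, P₃, φ, ψ, w, hP⟩ := exists_shortExact_projectiveResolution hS
  let T : ShortComplex (ChainComplex C ℕ) := .mk φ.hom ψ.hom w
  have : ∀ n, Projective (T.X₃.X n) := P₃.projective
  refine ⟨_, shortExact_mapHomologicalComplex (T := T) hP F, fun n ↦ ⟨ShortComplex.isoMk
    (P₁.isoLeftDerivedObj F n) (P₂.isoLeftDerivedObj F n) (P₃.isoLeftDerivedObj F n) ?_ ?_⟩⟩
  · exact (P₁.isoLeftDerivedObj_hom_naturality S.f P₂ φ.hom
      (by simpa using φ.hom_f_zero_comp_π_f_zero) F n).symm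
  · exact (P₂.isoLeftDerivedObj_hom_naturality S.g P₃ ψ.hom
      (by simpa using ψ.hom_f_zero_comp_π_f_zero) F n).symm

variable {S : ShortComplex C} (hS : S.ShortExact) (F : C ⥤ D) [F.Additive]
include hS

lemma exact_map_leftDerived (n : ℕ) : (S.map (F.leftDerived n)).Exact := by
  obtain ⟨T, hT, e⟩ := exists_shortExact_homology_iso_leftDerived hS F
  exact ShortComplex.exact_of_iso (e n).some.symm (hT.homology_exact₂ n)

lemma epi_leftDerived_zero_map_g : Epi ((F.leftDerived 0).map S.g) := by
  obtain ⟨T, hT, e⟩ := exists_shortExact_homology_iso_leftDerived hS F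
  have := hT.epi_g
  have : Epi (T.map (homologyFunctor D _ 0)).g :=
    epi_homologyMap_of_epi_of_not_rel T.g 0 (by simp)
  exact ((MorphismProperty.epimorphisms D).arrow_mk_iso_iff
    (Arrow.isoMk (ShortComplex.π₂.mapIso (e 0).some) (ShortComplex.π₃.mapIso (e 0).some)
      (e 0).some.hom.comm₂₃)).2 this

lemma exists_exact_leftDerived_connecting (n : ℕ) :
    ∃ (δ : (F.leftDerived (n + 1)).obj S.X₃ ⟶ (F.leftDerived n).obj S.X₁)
      (w : (F.leftDerived (n + 1)).map S.g ≫ δ = 0),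
      (ShortComplex.mk ((F.leftDerived (n + 1)).map S.g) δ w).Exact := by
  obtain ⟨T, hT, e⟩ := exists_shortExact_homology_iso_leftDerived hS F
  have hn : (ComplexShape.down ℕ).Rel (n + 1) n := ComplexShape.down_mk _ _ rfl
  let e₁ : (F.leftDerived n).obj S.X₁ ≅ T.X₁.homology n := ShortComplex.π₁.mapIso (e n).some
  let e₂ : (F.leftDerived (n + 1)).obj S.X₂ ≅ T.X₂.homology (n + 1) :=
    ShortComplex.π₂.mapIso (e (n + 1)).some
  let e₃ : (F.leftDerived (n + 1)).obj S.X₃ ≅ T.X₃.homology (n + 1) :=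
    ShortComplex.π₃.mapIso (e (n + 1)).some
  have comm : e₂.hom ≫ homologyMap T.g (n + 1) = (F.leftDerived (n + 1)).map S.g ≫ e₃.hom :=
    (e (n + 1)).some.hom.comm₂₃
  have w : (F.leftDerived (n + 1)).map S.g ≫ e₃.hom ≫ hT.δ (n + 1) n hn ≫ e₁.inv = 0 := by
    rw [← reassoc_of% comm, hT.comp_δ_assoc, zero_comp, comp_zero]
  exact ⟨_, w, ShortComplex.exact_of_iso
    (ShortComplex.isoMk e₂ e₃ e₁ comm (by simp)).symm (hT.homology_exact₃ (n + 1) n hn)⟩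

end LeftDerived

section Width

open Limits

variable {S : Type u} [CommRing S]

lemma shortExact_mk_ofHom {K L M : Type u} [AddCommGroup K] [AddCommGroup L] [AddCommGroup M]
    [Module S K] [Module S L] [Module S M] {f : K →ₗ[S] L} {g : L →ₗ[S] M}
    (hf : Function.Injective f) (hg : Function.Surjective g) (hfg : Function.Exact f g) :
    (ShortComplex.mk (ModuleCat.ofHom f) (ModuleCat.ofHom g)
      (ModuleCat.hom_ext hfg.linearMap_comp_eq_zero)).ShortExact :=
  ModuleCat.shortComplex_shortExact _ hfg hf hg

variable [IsLocalRing S]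

section VanishingTor

variable {N : Type u} [AddCommGroup N] [Module S N]

lemma isZero_tor_of_lt_moduleWidth {n : ℕ} (hn : ((n : ℝ) : EReal) < moduleWidth S N) :
    IsZero (((Tor (ModuleCat S) n).obj (ModuleCat.of S (IsLocalRing.ResidueField S))).obj
      (ModuleCat.of S N)) := by
  rw [ModuleCat.isZero_iff_subsingleton, ← not_nontrivial_iff_subsingleton]
  exact fun hN ↦ notMem_of_lt_csInf' hn ⟨n, rfl, hN⟩

lemma le_moduleWidth_iff {d : EReal} :
    d ≤ moduleWidth S N ↔ ∀ n : ℕ, ((n : ℝ) : EReal) < d →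
      IsZero (((Tor (ModuleCat S) n).obj (ModuleCat.of S (IsLocalRing.ResidueField S))).obj
        (ModuleCat.of S N)) := by
  refine ⟨fun h n hn ↦ isZero_tor_of_lt_moduleWidth (hn.trans_le h), fun h ↦ le_sInf ?_⟩
  rintro _ ⟨n, rfl, hN⟩
  by_contra! hn
  exact not_subsingleton _ (ModuleCat.isZero_iff_subsingleton.1 (h n hn))

end VanishingTor

variable {K L M : Type u} [AddCommGroup K] [AddCommGroup L] [AddCommGroup M]
  [Module S K] [Module S L] [Module S M] {f : K →ₗ[S] L} {g : L →ₗ[S] M}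
  (hf : Function.Injective f) (hg : Function.Surjective g) (hfg : Function.Exact f g)
include hf hg hfg

lemma min_moduleWidth_le_moduleWidth_middle :
    min (moduleWidth S K) (moduleWidth S M) ≤ moduleWidth S L := by
  refine le_moduleWidth_iff.2 fun n hn ↦ ?_
  obtain ⟨hnK, hnM⟩ := lt_min_iff.1 hn
  exact (exact_map_leftDerived (shortExact_mk_ofHom hf hg hfg) _ n).isZero_of_both_isZero
    (isZero_tor_of_lt_moduleWidth hnK) (isZero_tor_of_lt_moduleWidth hnM)

lemma min_moduleWidth_le_moduleWidth_right :
    min (moduleWidth S K + 1) (moduleWidth S L) ≤ moduleWidth S M := by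
  have hT := shortExact_mk_ofHom hf hg hfg
  let F : ModuleCat S ⥤ ModuleCat S := (MonoidalCategory.tensoringLeft (ModuleCat S)).obj
    (ModuleCat.of S (IsLocalRing.ResidueField S))
  refine le_moduleWidth_iff.2 fun n hn ↦
    show IsZero ((F.leftDerived n).obj (ModuleCat.of S M)) from ?_
  obtain ⟨hnK, hnL⟩ := lt_min_iff.1 hn
  have hL : IsZero ((F.leftDerived n).obj (ModuleCat.of S L)) := isZero_tor_of_lt_moduleWidth hnL
  cases n with
  | zero =>
    have : Epi ((F.leftDerived 0).map (ModuleCat.ofHom g)) := epi_leftDerived_zero_map_g hT F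
    exact hL.of_epi ((F.leftDerived 0).map (ModuleCat.ofHom g))
  | succ n =>
    obtain ⟨δ, w, hδ⟩ := exists_exact_leftDerived_connecting hT F n
    have hK : ((n : ℝ) : EReal) < moduleWidth S K := by
      push_cast at hnK
      exact lt_of_add_lt_add_right hnK
    exact hδ.isZero_of_both_isZero hL (isZero_tor_of_lt_moduleWidth hK)

lemma min_moduleWidth_eq_of_le_moduleWidth {d : EReal} (hd : d ≤ moduleWidth S K) :
    min d (moduleWidth S L) = min d (moduleWidth S M) := by
  have hd' : d ≤ moduleWidth S K + 1 := hd.trans (le_add_of_nonneg_right zero_le_one)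
  refine le_antisymm (le_min (min_le_left _ _) ?_) (le_min (min_le_left _ _) ?_)
  · exact (min_le_min_right _ hd').trans (min_moduleWidth_le_moduleWidth_right hf hg hfg)
  · exact (min_le_min_right _ hd).trans (min_moduleWidth_le_moduleWidth_middle hf hg hfg)

end Width

section Order

lemma max_sub_zero_eq_of_min_eq {d a b : EReal} (h : min d a = min d b) :
    max (d - a) 0 = max (d - b) 0 := by
  rcases le_or_gt d a with hda | had
  · have hdb : d ≤ b := min_eq_left_iff.1 (h.symm.trans (min_eq_left hda))
    rw [max_eq_right (EReal.sub_nonpos.2 hda), max_eq_right (EReal.sub_nonpos.2 hdb)]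
  · have hab : a = b := by grind
    rw [hab]

lemma iSup_eq_iff_of_max_eq {α ι : Type*} [CompleteLinearOrder α] {a b : ι → α} {z c : α}
    (h : ∀ i, max (a i) z = max (b i) z) (hc : z < c) : iSup a = c ↔ iSup b = c := by
  have hmax : max (iSup a) z = max (iSup b) z := eq_of_forall_ge_iff fun y ↦ by
    simp only [max_le_iff, iSup_le_iff]
    grind
  grind

end Order

theorem sup_depth_sub_width_eq_of_shortExact_general
    {R : Type u} [CommRing R] {K L M : Type u} [AddCommGroup K] [AddCommGroup L] [AddCommGroup M]
    [Module R K] [Module R L] [Module R M] {f : K →ₗ[R] L} {g : L →ₗ[R] M}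
    (hf : Function.Injective f) (hg : Function.Surjective g) (hfg : Function.Exact f g)
    {d : PrimeSpectrum R → EReal}
    (hd : ∀ p, d p ≤ moduleWidth (Localization.AtPrime p.asIdeal)
      (LocalizedModule p.asIdeal.primeCompl K))
    {c : EReal} (hc : 0 < c) :
    (⨆ p, d p - moduleWidth (Localization.AtPrime p.asIdeal)
      (LocalizedModule p.asIdeal.primeCompl L)) = c ↔
    (⨆ p, d p - moduleWidth (Localization.AtPrime p.asIdeal)
      (LocalizedModule p.asIdeal.primeCompl M)) = c :=
  iSup_eq_iff_of_max_eq (fun p ↦ max_sub_zero_eq_of_min_eq <|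
    min_moduleWidth_eq_of_le_moduleWidth
      (LocalizedModule.map_injective p.asIdeal.primeCompl f hf)
      (LocalizedModule.map_surjective p.asIdeal.primeCompl g hg)
      (LocalizedModule.map_exact p.asIdeal.primeCompl f g hfg) (hd p)) hc

/-- Let `R` be a commutative noetherian ring and `0 → K → L → M → 0` a short exact
sequence of `R`-modules such that `depth R_p ≤ width_{R_p} K_p` for every prime `p`.
If `sup { depth R_p − width_{R_p} L_p | p ∈ Spec R } = n` for some integer `n > 0`,
then `sup { depth R_p − width_{R_p} M_p | p ∈ Spec R } = n`. -/
theorem sup_depth_sub_width_eq_of_shortExact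
    (R : Type u) [CommRing R] [IsNoetherianRing R]
    (K L M : Type u) [AddCommGroup K] [AddCommGroup L] [AddCommGroup M]
    [Module R K] [Module R L] [Module R M]
    (f : K →ₗ[R] L) (g : L →ₗ[R] M)
    (hf : Function.Injective f) (hg : Function.Surjective g)
    (hfg : Function.Exact f g)
    (hK : ∀ p : PrimeSpectrum R,
      moduleDepth (Localization.AtPrime p.asIdeal) (Localization.AtPrime p.asIdeal) ≤
        moduleWidth (Localization.AtPrime p.asIdeal)
          (LocalizedModule p.asIdeal.primeCompl K))
    (n : ℤ) (hn : 0 < n)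
    (hL : (⨆ p : PrimeSpectrum R,
        moduleDepth (Localization.AtPrime p.asIdeal) (Localization.AtPrime p.asIdeal) -
          moduleWidth (Localization.AtPrime p.asIdeal)
            (LocalizedModule p.asIdeal.primeCompl L)) = ((n : ℝ) : EReal)) :
    (⨆ p : PrimeSpectrum R,
        moduleDepth (Localization.AtPrime p.asIdeal) (Localization.AtPrime p.asIdeal) -
          moduleWidth (Localization.AtPrime p.asIdeal)
            (LocalizedModule p.asIdeal.primeCompl M)) = ((n : ℝ) : EReal) :=
  (sup_depth_sub_width_eq_of_shortExact_general hf hg hfg hK (by exact_mod_cast hn)).1 hL
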